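/- For every natural number n with n ∉ {1,2} and every real (or complex) x, the Wronskian Wr(H₁,H₂,Hₙ)(x) equals 8·(n−1)·(n−2)·Ĥₙ(x), where the factors (n−1) and (n−2) are computed in ℝ (i.e., after casting n to ℝ). -/

import Mathlib

/-- Physicists' Hermite polynomials via the Rodrigues formula. -/
noncomputable def Hr (n : ℕ) (x : ℝ) : ℝ :=
  (-1) ^ n * Real.exp (x ^ 2) * iteratedDeriv n (fun t => Real.exp (-t ^ 2)) x

/-- Wronskian of three functions. -/
noncomputable def Wr (f g h : ℝ → ℝ) (x : ℝ) : ℝ :=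
  Matrix.det !![f x, g x, h x;
                deriv f x, deriv g x, deriv h x;
                deriv (deriv f) x, deriv (deriv g) x, deriv (deriv h) x]

/-- The function Ĥₙ. -/
noncomputable def Hhatr (n : ℕ) (x : ℝ) : ℝ :=
  Hr n x + 4 * (n : ℝ) * Hr (n - 2) x + 4 * (n : ℝ) * ((n : ℝ) - 3) * Hr (n - 4) x

theorem Hr_zero (x : ℝ) : Hr 0 x = 1 := by
  simp [Hr, ← Real.exp_add]

theorem Hr_deriv_aux (n : ℕ) (x : ℝ) :
    HasDerivAt (Hr n) (2 * x * Hr n x - Hr (n + 1) x) x := by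
  have hc : ContDiff ℝ (⊤ : ℕ∞) (fun t : ℝ => Real.exp (-t ^ 2)) := by fun_prop
  have hd : HasDerivAt (iteratedDeriv n (fun t : ℝ => Real.exp (-t ^ 2)))
      (iteratedDeriv (n + 1) (fun t : ℝ => Real.exp (-t ^ 2)) x) x := by
    rw [iteratedDeriv_succ]
    exact ((hc.differentiable_iteratedDeriv n (by exact_mod_cast WithTop.coe_lt_top n)) x).hasDerivAt
  have he : HasDerivAt (fun t : ℝ => (-1) ^ n * Real.exp (t ^ 2))
      ((-1) ^ n * (Real.exp (x ^ 2) * (2 * x))) x := by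
    have := ((hasDerivAt_pow 2 x).exp).const_mul ((-1 : ℝ) ^ n)
    simpa using this
  have h := he.mul hd
  refine h.congr_deriv ?_
  simp only [Hr, pow_succ]
  ring

theorem Hr_one (x : ℝ) : Hr 1 x = 2 * x := by
  have h := Hr_deriv_aux 0 x
  have h0 : Hr 0 = fun _ => 1 := funext Hr_zero
  rw [h0] at h
  have := h.unique (hasDerivAt_const x (1 : ℝ))
  simp at this
  linarith

theorem Hr_rec (n : ℕ) : ∀ x : ℝ,
    Hr (n + 2) x = 2 * x * Hr (n + 1) x - 2 * ((n : ℝ) + 1) * Hr n x := by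
  induction n with
  | zero =>
    intro x
    have h := Hr_deriv_aux 1 x
    have h1 : Hr 1 = fun t => 2 * t := funext Hr_one
    have h2 : HasDerivAt (Hr 1) 2 x := by
      rw [h1]; simpa using (hasDerivAt_id x).const_mul (2 : ℝ)
    have := h.unique h2
    simp only [Hr_zero, Hr_one, zero_add, Nat.cast_zero, Nat.reduceAdd] at this ⊢
    linarith
  | succ n ih =>
    intro x
    have h := Hr_deriv_aux (n + 2) x
    have hf : Hr (n + 2) = fun t => (2 * t) * Hr (n + 1) t - 2 * ((n : ℝ) + 1) * Hr n t :=
      funext ih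
    have h2 := (((hasDerivAt_id x).const_mul (2 : ℝ)).mul (Hr_deriv_aux (n + 1) x)).sub
      ((Hr_deriv_aux n x).const_mul (2 * ((n : ℝ) + 1)))
    rw [hf] at h
    have := h.unique h2
    rw [← hf] at this
    have e := ih x
    simp only [id, mul_one] at this
    push_cast
    rw [show n + 1 + 2 = n + 2 + 1 from rfl, show n + 1 + 1 = n + 2 from rfl] at *
    linear_combination -this + 2 * x * e

theorem Hr_deriv (n : ℕ) : deriv (Hr (n + 1)) = fun x => 2 * ((n : ℝ) + 1) * Hr n x := by
  funext x
  rw [(Hr_deriv_aux (n + 1) x).deriv, show n + 1 + 1 = n + 2 from rfl, Hr_rec n x]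
  ring

theorem Hr_deriv_zero : deriv (Hr 0) = fun _ => 0 := by
  rw [funext Hr_zero]; simp

theorem Hr_deriv2 (n : ℕ) : deriv (deriv (Hr (n + 2))) =
    fun x => 4 * ((n : ℝ) + 1) * ((n : ℝ) + 2) * Hr n x := by
  funext x
  rw [Hr_deriv (n + 1)]
  have := (Hr_deriv_aux (n + 1) x).differentiableAt
  rw [deriv_const_mul _ this, Hr_deriv n]
  push_cast
  ring

theorem stmt0 (n : ℕ) (hn : n ∉ ({1, 2} : Set ℕ)) (x : ℝ) :
    Wr (Hr 1) (Hr 2) (Hr n) x = 8 * ((n : ℝ) - 1) * ((n : ℝ) - 2) * Hhatr n x := by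
  have d1 : deriv (Hr 1) = fun _ => 2 := by
    rw [Hr_deriv 0]; funext y; simp [Hr_zero]
  have d2 : deriv (Hr 2) x = 8 * x := by
    simp only [Hr_deriv 1, Hr_one]; push_cast; ring
  have d22 : deriv (deriv (Hr 2)) x = 8 := by
    simp only [Hr_deriv2 0, Hr_zero]; push_cast; ring
  have h2 : Hr 2 x = 4 * x ^ 2 - 2 := by
    rw [Hr_rec 0 x, Hr_one, Hr_zero]; push_cast; ring
  have key : Wr (Hr 1) (Hr 2) (Hr n) x = 16 * Hr n x - 16 * x * deriv (Hr n) x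
      + (8 * x ^ 2 + 4) * deriv (deriv (Hr n)) x := by
    simp only [Wr, d22, d2, d1, h2, Hr_one, Matrix.det_fin_three]
    simp
    ring
  rw [key]
  simp only [Set.mem_insert_iff, Set.mem_singleton_iff, not_or] at hn
  match n, hn with
  | 0, _ => simp [Hr_deriv_zero, Hhatr, Hr_zero]; norm_num
  | 1, hn => simp at hn
  | 2, hn => simp at hn
  | 3, _ =>
    rw [Hr_deriv2 1, Hr_deriv 2]
    simp only [Hhatr, Hr_rec 1 x, h2, Hr_one, Nat.reduceSub]
    push_cast
    ring
  | m + 4, _ =>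
    rw [Hr_deriv2 (m + 2), Hr_deriv (m + 3)]
    simp only [Hhatr, show m + 4 - 2 = m + 2 by omega, show m + 4 - 4 = m by omega,
      Hr_rec (m + 2) x, Hr_rec (m + 1) x, Hr_rec m x]
    push_cast
    ring
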